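/- Let G be a finite simple graph that contains no cycle of length 3 and no induced cycle of odd length at least 5 (i.e., no set of k vertices, k odd and k ≥ 5, inducing exactly a cycle). Then G is bipartite. -/

import Mathlib

/-- `G` contains an induced subgraph isomorphic to `H`. -/
def ContainsInduced {V W : Type*} (G : SimpleGraph V) (H : SimpleGraph W) : Prop :=
  ∃ U : Set V, Nonempty (G.induce U ≃g H)

open SimpleGraph in
theorem segment_walk {V : Type*} {G : SimpleGraph V} {u v : V} (p : G.Walk u v) (i d : ℕ)
    (h : i + d ≤ p.length) : ∃ q : G.Walk (p.getVert i) (p.getVert (i + d)), q.length = d := by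
  induction d with
  | zero => exact ⟨Walk.nil, rfl⟩
  | succ d ih =>
    obtain ⟨q, hq⟩ := ih (by omega)
    exact ⟨q.concat (p.adj_getVert_succ (by omega)), by simp [hq]⟩

open SimpleGraph in
theorem shortcut {V : Type*} {G : SimpleGraph V} {u : V} (p : G.Walk u u)
    (hp : Odd p.length)
    (hmin : ∀ (w : V) (q : G.Walk w w), Odd q.length → p.length ≤ q.length)
    (i j : ℕ) (hij : i < j) (hj : j < p.length)
    (q : G.Walk (p.getVert i) (p.getVert j)) :
    p.length ≤ (j - i) + q.length ∨ j - i ≤ q.length := by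
  obtain ⟨d, rfl⟩ := Nat.exists_eq_add_of_le hij.le
  obtain ⟨a, ha⟩ := segment_walk p i d hj.le
  have hb : (p.drop (i + d)).length = p.length - (i + d) := p.drop_length _
  have hc : (p.take i).length = i := by rw [p.take_length]; omega
  have h1 := hmin _ (a.append q.reverse)
  have h2 := hmin _ (((p.drop (i + d)).append (p.take i)).append q)
  simp only [Walk.length_append, Walk.length_reverse, ha, hb, hc, Nat.odd_iff] at h1 h2
  rw [Nat.odd_iff] at hp
  omega

open SimpleGraph in
theorem stmt_8 {V : Type*} [Fintype V] (G : SimpleGraph V)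
    (htriangle : ∀ a b c : V, G.Adj a b → G.Adj b c → G.Adj c a → False)
    (hodd : ∀ k : ℕ, 5 ≤ k → Odd k → ¬ ContainsInduced G (SimpleGraph.cycleGraph k)) :
    ∃ S : Set V, (∀ v ∈ S, ∀ w ∈ S, ¬ G.Adj v w) ∧ (∀ v ∈ Sᶜ, ∀ w ∈ Sᶜ, ¬ G.Adj v w) := by
  by_cases hcol : G.Colorable 2
  · obtain ⟨c⟩ := hcol
    refine ⟨{v | c v = 0}, ?_, ?_⟩
    · intro v hv w hw h
      exact c.valid h (by simp_all)
    · intro v hv w hw h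
      have := c.valid h
      simp only [Set.mem_compl_iff, Set.mem_ofPred_eq] at hv hw
      omega
  exfalso
  rw [two_colorable_iff_forall_loop_even] at hcol
  push Not at hcol
  have hex : ∃ k : ℕ, ∃ (w : V) (q : G.Walk w w), Odd q.length ∧ q.length = k := by
    obtain ⟨u, w, hw⟩ := hcol
    exact ⟨_, u, w, by simpa using hw, rfl⟩
  classical
  obtain ⟨u, p, hp, hk⟩ := Nat.find_spec hex
  have hmin : ∀ (w : V) (q : G.Walk w w), Odd q.length → p.length ≤ q.length := by
    intro w q hq
    rw [hk]
    exact Nat.find_min' hex ⟨w, q, hq, rfl⟩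
  clear hk
  have hne : ∀ i j, i < j → j < p.length → p.getVert i ≠ p.getVert j := by
    intro i j hij hj h
    have := shortcut p hp hmin i j hij hj (Walk.nil.copy rfl h)
    simp only [Walk.length_copy, Walk.length_nil] at this
    omega
  have hlast : p.getVert p.length = p.getVert 0 := by simp
  have hadj : ∀ i j, i < j → j < p.length →
      (G.Adj (p.getVert i) (p.getVert j) ↔ j = i + 1 ∨ (i = 0 ∧ j + 1 = p.length)) := by
    intro i j hij hj
    constructor
    · intro h
      have := shortcut p hp hmin i j hij hj h.toWalk
      have hl : h.toWalk.length = 1 := rfl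
      rw [hl] at this
      omega
    · rintro (rfl | ⟨rfl, h⟩)
      · exact p.adj_getVert_succ (by omega)
      · have := p.adj_getVert_succ (i := j) hj
        rw [h, hlast] at this
        exact this.symm
  by_cases h5 : 5 ≤ p.length
  · refine hodd _ h5 hp ?_
    have hinj : Function.Injective (fun i : Fin p.length => p.getVert i) := by
      intro i j h
      rcases lt_trichotomy i j with hl | hl | hl
      · exact absurd h (hne _ _ hl j.2)
      · exact hl
      · exact absurd h.symm (hne _ _ hl i.2)
    have key : ∀ i j : Fin p.length, i < j →
        (G.Adj (p.getVert i) (p.getVert j) ↔ (cycleGraph p.length).Adj i j) := by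
      intro i j hij
      rw [hadj i j hij j.2, cycleGraph_adj', Fin.sub_val_of_le hij.le, Fin.coe_sub_iff_lt.2 hij]
      have := i.2
      have := j.2
      have : (i : ℕ) < j := hij
      omega
    refine ⟨Set.range (fun i : Fin p.length => p.getVert i), ⟨RelIso.symm
      ⟨Equiv.ofInjective _ hinj, ?_⟩⟩⟩
    intro i j
    change G.Adj (p.getVert i) (p.getVert j) ↔ _
    rcases lt_trichotomy i j with hl | hl | hl
    · exact key i j hl
    · subst hl; simp
    · rw [G.adj_comm, SimpleGraph.adj_comm _ i j]; exact key j i hl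
  · have h13 : p.length = 1 ∨ p.length = 3 := by
      rw [Nat.odd_iff] at hp
      omega
    rcases h13 with h | h
    · have := p.adj_getVert_succ (i := 0) (by omega)
      rw [h] at hlast
      exact G.ne_of_adj this hlast.symm
    · have h0 := p.adj_getVert_succ (i := 0) (by omega)
      have h1 := p.adj_getVert_succ (i := 1) (by omega)
      have h2 := p.adj_getVert_succ (i := 2) (by omega)
      rw [h] at hlast
      rw [hlast] at h2
      exact htriangle _ _ _ h0 h1 h2
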